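/- For any X5-interpretation M = ⟨H,T⟩ and any formula φ: (i) ⟨H,T⟩ ⊨ φ iff M(φ) = 2; (ii) ⟨T,T⟩ ⊨ φ iff M(φ) > 0; (iii) ⟨H,T⟩ ⫤ φ iff M(φ) = −2; (iv) ⟨T,T⟩ ⫤ φ iff M(φ) < 0, where M(φ) is the five-valued valuation. -/

import Mathlib

open scoped Classical

namespace X5Paper

/-- Explicit literals: an atom `p` or its explicit negation `∼p`. -/
inductive XLit (At : Type) : Type
  | pos : At → XLit At
  | neg : At → XLit At

/-- A set of explicit literals is consistent if it contains no atom together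
with its explicit negation. -/
def Consistent {At : Type} (T : Set (XLit At)) : Prop :=
  ∀ p : At, ¬ (XLit.pos p ∈ T ∧ XLit.neg p ∈ T)

/-- Nested expressions: ⊤, ⊥, atoms, ∧, ∨, default negation ¬, explicit negation ∼. -/
inductive NExp (At : Type) : Type
  | top : NExp At
  | bot : NExp At
  | atom : At → NExp At
  | conj : NExp At → NExp At → NExp At
  | disj : NExp At → NExp At → NExp At
  | dneg : NExp At → NExp At
  | xneg : NExp At → NExp At

variable {At : Type}

mutual
/-- Satisfaction `T ⊨ F` of a nested expression by a set of explicit literals. -/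
def NExp.sat (T : Set (XLit At)) : NExp At → Prop
  | .top => True
  | .bot => False
  | .atom p => XLit.pos p ∈ T
  | .conj F G => NExp.sat T F ∧ NExp.sat T G
  | .disj F G => NExp.sat T F ∨ NExp.sat T G
  | .dneg F => ¬ NExp.sat T F
  | .xneg F => NExp.fals T F

/-- Falsification `T ⫤ F` of a nested expression by a set of explicit literals. -/
def NExp.fals (T : Set (XLit At)) : NExp At → Prop
  | .top => False
  | .bot => True
  | .atom p => XLit.neg p ∈ T
  | .conj F G => NExp.fals T F ∨ NExp.fals T G
  | .disj F G => NExp.fals T F ∧ NExp.fals T G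
  | .dneg F => NExp.sat T F
  | .xneg F => NExp.sat T F
end

/-- The reduct `F^T` of a nested expression. -/
noncomputable def NExp.reduct (T : Set (XLit At)) : NExp At → NExp At
  | .top => .top
  | .bot => .bot
  | .atom p => .atom p
  | .conj F G => .conj (NExp.reduct T F) (NExp.reduct T G)
  | .disj F G => .disj (NExp.reduct T F) (NExp.reduct T G)
  | .dneg F => if NExp.sat T F then .bot else .top
  | .xneg F => .xneg (NExp.reduct T F)

/-- Formulas: atoms, ⊥, ∧, ∨, →, explicit negation ∼. -/
inductive Frm (At : Type) : Type
  | atom : At → Frm At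
  | bot : Frm At
  | conj : Frm At → Frm At → Frm At
  | disj : Frm At → Frm At → Frm At
  | impl : Frm At → Frm At → Frm At
  | xneg : Frm At → Frm At

/-- Default negation `¬φ := φ → ⊥`. -/
def Frm.neg (φ : Frm At) : Frm At := Frm.impl φ Frm.bot

/-- `⊤ := ¬⊥`. -/
def Frm.top : Frm At := Frm.neg Frm.bot

/-- Weak equivalence `φ ↔ ψ := (φ→ψ) ∧ (ψ→φ)`. -/
def Frm.iff (φ ψ : Frm At) : Frm At := Frm.conj (Frm.impl φ ψ) (Frm.impl ψ φ)

/-- Strong equivalence connective `φ ⇔ ψ := (φ↔ψ) ∧ (∼φ↔∼ψ)`. -/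
def Frm.siff (φ ψ : Frm At) : Frm At :=
  Frm.conj (Frm.iff φ ψ) (Frm.iff (Frm.xneg φ) (Frm.xneg ψ))

mutual
/-- X5 satisfaction `⟨H,T⟩ ⊨ φ`. -/
def Sat : Set (XLit At) → Set (XLit At) → Frm At → Prop
  | H, _, .atom p => XLit.pos p ∈ H
  | _, _, .bot => False
  | H, T, .conj φ ψ => Sat H T φ ∧ Sat H T ψ
  | H, T, .disj φ ψ => Sat H T φ ∨ Sat H T ψ
  | H, T, .impl φ ψ => (Sat H T φ → Sat H T ψ) ∧ (Sat T T φ → Sat T T ψ)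
  | H, T, .xneg φ => Fals H T φ

/-- X5 falsification `⟨H,T⟩ ⫤ φ`. -/
def Fals : Set (XLit At) → Set (XLit At) → Frm At → Prop
  | H, _, .atom p => XLit.neg p ∈ H
  | _, _, .bot => True
  | H, T, .conj φ ψ => Fals H T φ ∨ Fals H T ψ
  | H, T, .disj φ ψ => Fals H T φ ∧ Fals H T ψ
  | H, T, .impl φ ψ => Sat T T φ ∧ Fals H T ψ
  | H, T, .xneg φ => Sat H T φ
end

/-- X5 validity: satisfied by every X5-interpretation `⟨H,T⟩`. -/
def X5Valid (φ : Frm At) : Prop :=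
  ∀ H T : Set (XLit At), Consistent H → Consistent T → H ⊆ T → Sat H T φ

/-- Nested expressions viewed as formulas (`¬F := F → ⊥`, `⊤ := ¬⊥`). -/
def NExp.toFrm : NExp At → Frm At
  | .top => Frm.top
  | .bot => .bot
  | .atom p => .atom p
  | .conj F G => .conj F.toFrm G.toFrm
  | .disj F G => .disj F.toFrm G.toFrm
  | .dneg F => Frm.neg F.toFrm
  | .xneg F => .xneg F.toFrm

/-- Uniform substitution `φ[α/p]`. -/
noncomputable def Frm.subst (p : At) (α : Frm At) : Frm At → Frm At
  | .atom q => if q = p then α else .atom q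
  | .bot => .bot
  | .conj φ ψ => .conj (Frm.subst p α φ) (Frm.subst p α ψ)
  | .disj φ ψ => .disj (Frm.subst p α φ) (Frm.subst p α ψ)
  | .impl φ ψ => .impl (Frm.subst p α φ) (Frm.subst p α ψ)
  | .xneg φ => .xneg (Frm.subst p α φ)

/-- A formula contains no explicit negation. -/
def NoXneg : Frm At → Prop
  | .atom _ => True
  | .bot => True
  | .conj φ ψ => NoXneg φ ∧ NoXneg ψ
  | .disj φ ψ => NoXneg φ ∧ NoXneg ψ
  | .impl φ ψ => NoXneg φ ∧ NoXneg ψ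
  | .xneg _ => False

/-- HT satisfaction for (∼-free) formulas; the `∼` clause is a dummy. -/
def HTSat : Set At → Set At → Frm At → Prop
  | H, _, .atom p => p ∈ H
  | _, _, .bot => False
  | H, T, .conj φ ψ => HTSat H T φ ∧ HTSat H T ψ
  | H, T, .disj φ ψ => HTSat H T φ ∨ HTSat H T ψ
  | H, T, .impl φ ψ => (HTSat H T φ → HTSat H T ψ) ∧ (HTSat T T φ → HTSat T T ψ)
  | _, _, .xneg _ => False

/-- HT validity for ∼-free formulas. -/
def HTValid (φ : Frm At) : Prop :=
  ∀ H T : Set At, H ⊆ T → HTSat H T φ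

/-- Atom `p` occurs in a formula. -/
def Frm.occurs (p : At) : Frm At → Prop
  | .atom q => q = p
  | .bot => False
  | .conj φ ψ => Frm.occurs p φ ∨ Frm.occurs p ψ
  | .disj φ ψ => Frm.occurs p φ ∨ Frm.occurs p ψ
  | .impl φ ψ => Frm.occurs p φ ∨ Frm.occurs p ψ
  | .xneg φ => Frm.occurs p φ

/-- Atom `p` occurs only outside the scope of explicit negation `∼`. -/
def OutsideXneg (p : At) : Frm At → Prop
  | .atom _ => True
  | .bot => True
  | .conj φ ψ => OutsideXneg p φ ∧ OutsideXneg p ψ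
  | .disj φ ψ => OutsideXneg p φ ∧ OutsideXneg p ψ
  | .impl φ ψ => OutsideXneg p φ ∧ OutsideXneg p ψ
  | .xneg φ => ¬ Frm.occurs p φ

/-- A rule `F → G` of a program. -/
abbrev Rule (At : Type) := NExp At × NExp At

/-- `T` is a model of a program: it satisfies the head whenever it satisfies the body. -/
def NModels (T : Set (XLit At)) (Prog : Set (Rule At)) : Prop :=
  ∀ r ∈ Prog, NExp.sat T r.1 → NExp.sat T r.2

/-- The reduct `Π^T` of a program. -/
noncomputable def progReduct (T : Set (XLit At)) (Prog : Set (Rule At)) : Set (Rule At) :=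
  (fun r : Rule At => (NExp.reduct T r.1, NExp.reduct T r.2)) '' Prog

/-- `T` is an answer set of `Π`: a ⊆-minimal (consistent) model of the reduct `Π^T`. -/
def AnswerSet (Prog : Set (Rule At)) (T : Set (XLit At)) : Prop :=
  Consistent T ∧ NModels T (progReduct T Prog) ∧
    ∀ T' : Set (XLit At), Consistent T' → T' ⊆ T → NModels T' (progReduct T Prog) → T' = T

/-- The theory corresponding to a program: each rule `F → G` read as an implication. -/
def ruleTheory (Prog : Set (Rule At)) : Set (Frm At) :=
  (fun r : Rule At => Frm.impl r.1.toFrm r.2.toFrm) '' Prog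

/-- `⟨T,T⟩` is an equilibrium model of the theory `Γ`. -/
def EqModel (Γ : Set (Frm At)) (T : Set (XLit At)) : Prop :=
  Consistent T ∧ (∀ φ ∈ Γ, Sat T T φ) ∧
    ¬ ∃ H : Set (XLit At), Consistent H ∧ H ⊂ T ∧ ∀ φ ∈ Γ, Sat H T φ

mutual
/-- Generalized Ferraris reduct `φ^T₊` of a formula (a nested expression). -/
noncomputable def redPos (T : Set (XLit At)) : Frm At → NExp At
  | .atom p => if XLit.pos p ∈ T then .atom p else .bot
  | .bot => .bot
  | .conj α β => if Sat T T (Frm.conj α β) then .conj (redPos T α) (redPos T β) else .bot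
  | .disj α β => if Sat T T (Frm.disj α β) then .disj (redPos T α) (redPos T β) else .bot
  | .impl α β => if Sat T T (Frm.impl α β) then .disj (.dneg (redPos T α)) (redPos T β) else .bot
  | .xneg α => if Sat T T (Frm.xneg α) then .xneg (redNeg T α) else .bot

/-- Generalized Ferraris reduct `φ^T₋` of a formula (a nested expression). -/
noncomputable def redNeg (T : Set (XLit At)) : Frm At → NExp At
  | .atom p => if XLit.neg p ∈ T then .atom p else .top
  | .bot => .bot
  | .conj α β => if Fals T T (Frm.conj α β) then .conj (redNeg T α) (redNeg T β) else .top
  | .disj α β => if Fals T T (Frm.disj α β) then .disj (redNeg T α) (redNeg T β) else .top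
  | .impl α β => if Fals T T (Frm.impl α β) then redNeg T β else .top
  | .xneg α => if Fals T T (Frm.xneg α) then .xneg (redPos T α) else .top
end

mutual
/-- Generalized Ferraris reduct `F^T₊` of a nested expression. -/
noncomputable def nRedPos (T : Set (XLit At)) : NExp At → NExp At
  | .top => .top
  | .bot => .bot
  | .atom p => if XLit.pos p ∈ T then .atom p else .bot
  | .conj α β => if NExp.sat T (NExp.conj α β) then .conj (nRedPos T α) (nRedPos T β) else .bot
  | .disj α β => if NExp.sat T (NExp.disj α β) then .disj (nRedPos T α) (nRedPos T β) else .bot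
  | .dneg α => if NExp.sat T (NExp.dneg α) then .dneg (nRedPos T α) else .bot
  | .xneg α => if NExp.sat T (NExp.xneg α) then .xneg (nRedNeg T α) else .bot

/-- Generalized Ferraris reduct `F^T₋` of a nested expression. -/
noncomputable def nRedNeg (T : Set (XLit At)) : NExp At → NExp At
  | .top => .top
  | .bot => .bot
  | .atom p => if XLit.neg p ∈ T then .atom p else .top
  | .conj α β => if NExp.fals T (NExp.conj α β) then .conj (nRedNeg T α) (nRedNeg T β) else .top
  | .disj α β => if NExp.fals T (NExp.disj α β) then .disj (nRedNeg T α) (nRedNeg T β) else .top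
  | .dneg α => if NExp.fals T (NExp.dneg α) then .bot else .top
  | .xneg α => if NExp.fals T (NExp.xneg α) then .xneg (nRedPos T α) else .top
end

/-- The five-valued valuation `M(φ)` of `M = ⟨H,T⟩`. -/
noncomputable def val (H T : Set (XLit At)) : Frm At → ℤ
  | .atom p =>
      if XLit.pos p ∈ H then 2
      else if XLit.neg p ∈ H then -2
      else if XLit.pos p ∈ T then 1
      else if XLit.neg p ∈ T then -1
      else 0
  | .bot => -2
  | .conj φ ψ => min (val H T φ) (val H T ψ)
  | .disj φ ψ => max (val H T φ) (val H T ψ)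
  | .impl φ ψ => if val H T φ ≤ max (val H T ψ) 0 then 2 else val H T ψ
  | .xneg φ => - val H T φ

/-!
Only the sign of `M(φ)` matters at `⟨T,T⟩`, and only whether `M(φ)` reaches an end of the range
`[-2, 2]` matters at `⟨H,T⟩`. Read this way, every clause of the valuation is a clause of the
semantics. The sign propagates through all connectives on its own, whereas the extreme values refer
back to positivity at each implication, so the claims about `⟨T,T⟩` admit an induction of their own,
on which the induction for `⟨H,T⟩` rests. Writing `M(φ) = 2` as `2 ≤ M(φ)` and `M(φ) = -2` as
`M(φ) ≤ -2` makes the clauses for `∧` and `∨` the order-theoretic characterizations of `min` and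
`max`.
-/

theorem Consistent.mono {H T : Set (XLit At)} (hT : Consistent T) (hsub : H ⊆ T) : Consistent H :=
  fun p hp => hT p ⟨hsub hp.1, hsub hp.2⟩

theorem val_mem_Icc (H T : Set (XLit At)) (φ : Frm At) : val H T φ ∈ Set.Icc (-2) 2 := by
  induction φ with
  | atom p => simp only [val]; split_ifs <;> simp
  | bot => simp [val]
  | conj φ ψ hφ hψ => exact ⟨le_min hφ.1 hψ.1, min_le_of_left_le hφ.2⟩
  | disj φ ψ hφ hψ => exact ⟨le_max_of_le_left hφ.1, max_le hφ.2 hψ.2⟩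
  | impl φ ψ _ hψ =>
    simp only [val]
    split_ifs
    · simp
    · exact hψ
  | xneg φ hφ => exact ⟨neg_le_neg hφ.2, neg_le.mpr hφ.1⟩

section Atom

variable {H T : Set (XLit At)} (p : At)

theorem val_atom_pos_iff (hT : Consistent T) (hsub : H ⊆ T) :
    0 < val H T (.atom p) ↔ XLit.pos p ∈ T := by
  have hp := hT p
  have hpos := @hsub (.pos p)
  have hneg := @hsub (.neg p)
  simp only [val]
  split_ifs <;> simp_all

theorem val_atom_neg_iff (hT : Consistent T) (hsub : H ⊆ T) :
    val H T (.atom p) < 0 ↔ XLit.neg p ∈ T := by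
  have hp := hT p
  have hpos := @hsub (.pos p)
  have hneg := @hsub (.neg p)
  simp only [val]
  split_ifs <;> simp_all

theorem two_le_val_atom_iff : 2 ≤ val H T (.atom p) ↔ XLit.pos p ∈ H := by
  simp only [val]
  split_ifs <;> simp_all

theorem val_atom_le_neg_two_iff (hH : Consistent H) :
    val H T (.atom p) ≤ -2 ↔ XLit.neg p ∈ H := by
  have hp := hH p
  simp only [val]
  split_ifs <;> simp_all

end Atom

section Impl

variable (H T : Set (XLit At)) (φ ψ : Frm At)

theorem val_impl_pos_iff :
    0 < val H T (.impl φ ψ) ↔ (0 < val H T φ → 0 < val H T ψ) := by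
  simp only [val]
  split_ifs <;> omega

theorem val_impl_neg_iff :
    val H T (.impl φ ψ) < 0 ↔ 0 < val H T φ ∧ val H T ψ < 0 := by
  simp only [val]
  split_ifs <;> omega

theorem two_le_val_impl_iff :
    2 ≤ val H T (.impl φ ψ) ↔
      (2 ≤ val H T φ → 2 ≤ val H T ψ) ∧ (0 < val H T φ → 0 < val H T ψ) := by
  have hφ : val H T φ ≤ 2 := (val_mem_Icc H T φ).2
  simp only [val]
  split_ifs <;> omega

theorem val_impl_le_neg_two_iff :
    val H T (.impl φ ψ) ≤ -2 ↔ 0 < val H T φ ∧ val H T ψ ≤ -2 := by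
  simp only [val]
  split_ifs <;> omega

end Impl

section Characterization

variable {H T : Set (XLit At)}

mutual

theorem sat_total_iff_val_pos (hT : Consistent T) (hsub : H ⊆ T) :
    ∀ φ : Frm At, Sat T T φ ↔ 0 < val H T φ
  | .atom p => by rw [Sat, val_atom_pos_iff p hT hsub]
  | .bot => by simp [Sat, val]
  | .conj φ ψ => by
    rw [Sat, val, lt_min_iff, sat_total_iff_val_pos hT hsub φ, sat_total_iff_val_pos hT hsub ψ]
  | .disj φ ψ => by
    rw [Sat, val, lt_max_iff, sat_total_iff_val_pos hT hsub φ, sat_total_iff_val_pos hT hsub ψ]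
  | .impl φ ψ => by
    rw [Sat, and_self, val_impl_pos_iff, sat_total_iff_val_pos hT hsub φ,
      sat_total_iff_val_pos hT hsub ψ]
  | .xneg φ => by rw [Sat, val, neg_pos, fals_total_iff_val_neg hT hsub φ]

theorem fals_total_iff_val_neg (hT : Consistent T) (hsub : H ⊆ T) :
    ∀ φ : Frm At, Fals T T φ ↔ val H T φ < 0
  | .atom p => by rw [Fals, val_atom_neg_iff p hT hsub]
  | .bot => by simp [Fals, val]
  | .conj φ ψ => by
    rw [Fals, val, min_lt_iff, fals_total_iff_val_neg hT hsub φ, fals_total_iff_val_neg hT hsub ψ]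
  | .disj φ ψ => by
    rw [Fals, val, max_lt_iff, fals_total_iff_val_neg hT hsub φ, fals_total_iff_val_neg hT hsub ψ]
  | .impl φ ψ => by
    rw [Fals, val_impl_neg_iff, sat_total_iff_val_pos hT hsub φ, fals_total_iff_val_neg hT hsub ψ]
  | .xneg φ => by rw [Fals, val, neg_lt_zero, sat_total_iff_val_pos hT hsub φ]

end

mutual

theorem sat_iff_two_le_val (hT : Consistent T) (hsub : H ⊆ T) :
    ∀ φ : Frm At, Sat H T φ ↔ 2 ≤ val H T φ
  | .atom p => by rw [Sat, two_le_val_atom_iff]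
  | .bot => by simp [Sat, val]
  | .conj φ ψ => by
    rw [Sat, val, le_min_iff, sat_iff_two_le_val hT hsub φ, sat_iff_two_le_val hT hsub ψ]
  | .disj φ ψ => by
    rw [Sat, val, le_max_iff, sat_iff_two_le_val hT hsub φ, sat_iff_two_le_val hT hsub ψ]
  | .impl φ ψ => by
    rw [Sat, two_le_val_impl_iff, sat_iff_two_le_val hT hsub φ, sat_iff_two_le_val hT hsub ψ,
      sat_total_iff_val_pos hT hsub φ, sat_total_iff_val_pos hT hsub ψ]
  | .xneg φ => by rw [Sat, val, le_neg, fals_iff_val_le_neg_two hT hsub φ]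

theorem fals_iff_val_le_neg_two (hT : Consistent T) (hsub : H ⊆ T) :
    ∀ φ : Frm At, Fals H T φ ↔ val H T φ ≤ -2
  | .atom p => by rw [Fals, val_atom_le_neg_two_iff p (hT.mono hsub)]
  | .bot => by simp [Fals, val]
  | .conj φ ψ => by
    rw [Fals, val, min_le_iff, fals_iff_val_le_neg_two hT hsub φ,
      fals_iff_val_le_neg_two hT hsub ψ]
  | .disj φ ψ => by
    rw [Fals, val, max_le_iff, fals_iff_val_le_neg_two hT hsub φ,
      fals_iff_val_le_neg_two hT hsub ψ]
  | .impl φ ψ => by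
    rw [Fals, val_impl_le_neg_two_iff, sat_total_iff_val_pos hT hsub φ,
      fals_iff_val_le_neg_two hT hsub ψ]
  | .xneg φ => by rw [Fals, val, neg_le_neg_iff, sat_iff_two_le_val hT hsub φ]

end

end Characterization

/-- for any X5-interpretation `M = ⟨H,T⟩` and formula `φ`:
`⟨H,T⟩ ⊨ φ` iff `M(φ) = 2`; `⟨T,T⟩ ⊨ φ` iff `M(φ) > 0`;
`⟨H,T⟩ ⫤ φ` iff `M(φ) = −2`; `⟨T,T⟩ ⫤ φ` iff `M(φ) < 0`. -/
theorem stmt11 (At : Type) (H T : Set (XLit At))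
    (hH : Consistent H) (hT : Consistent T) (hsub : H ⊆ T) (φ : Frm At) :
    (Sat H T φ ↔ val H T φ = 2) ∧
    (Sat T T φ ↔ 0 < val H T φ) ∧
    (Fals H T φ ↔ val H T φ = -2) ∧
    (Fals T T φ ↔ val H T φ < 0) := by
  obtain ⟨hlower, hupper⟩ := val_mem_Icc H T φ
  exact ⟨(sat_iff_two_le_val hT hsub φ).trans hupper.ge_iff_eq,
    sat_total_iff_val_pos hT hsub φ,
    (fals_iff_val_le_neg_two hT hsub φ).trans hlower.ge_iff_eq',
    fals_total_iff_val_neg hT hsub φ⟩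

end X5Paper
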